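/- For positive definite matrices A₁,…,A_n, B₁,…,B_n and 1 ≤ p ≤ 2, Tr[(Σᵢ (Aᵢ+Bᵢ)^p)^{1/p}] ≤ Tr[(Σᵢ Aᵢ^p)^{1/p}] + Tr[(Σᵢ Bᵢ^p)^{1/p}]. -/

import Mathlib

open scoped ComplexOrder Kronecker

/-- Matrix power via the continuous functional calculus. -/
noncomputable def mpow {n : Type*} [Fintype n] [DecidableEq n]
    (A : Matrix n n ℂ) (p : ℝ) : Matrix n n ℂ :=
  cfc (fun x : ℝ => x ^ p) A

/-- The Loewner order on matrices. -/
def LoewnerLE {n : Type*} [Fintype n] (A B : Matrix n n ℂ) : Prop :=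
  (B - A).PosSemidef

/-- The matrix geometric mean `A # B = A^{1/2}(A^{-1/2} B A^{-1/2})^{1/2} A^{1/2}`. -/
noncomputable def geo {n : Type*} [Fintype n] [DecidableEq n]
    (A B : Matrix n n ℂ) : Matrix n n ℂ :=
  mpow A (1/2) * mpow (mpow A (-(1/2)) * B * mpow A (-(1/2))) (1/2) * mpow A (1/2)

/-- The generalized Kantorovich constant. -/
noncomputable def Kconst (h p : ℝ) : ℝ :=
  ((h ^ p - h) / ((p - 1) * (h - 1))) *
    (((p - 1) / p) * ((h ^ p - 1) / (h ^ p - h))) ^ p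

/-- The Specht ratio. -/
noncomputable def Specht (h : ℝ) : ℝ :=
  if h = 1 then 1 else (h - 1) * h ^ (1 / (h - 1)) / (Real.exp 1 * Real.log h)

/-!
The functional `F(A, Y) = Re Tr (A ^ p * K * Y ^ (1 - p) * Kᴴ)` is jointly subadditive for
`1 ≤ p ≤ 2` (Ando). The scalar kernel `a ^ p * y ^ (1 - p)` is a positive mixture of the
resolvent kernels `a² / (a + t y)`, each of which gives the form `⟨A K, (L_A + t R_Y)⁻¹ (A K)⟩`. As
the maximum over `W` of a quadratic expression that is linear in `(A, Y)`, that form is subadditive.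

Now take `K = 1` and put `S(A) = (∑ᵢ Aᵢ ^ p) ^ (1 / p)`. Since `S(A) ^ p = ∑ᵢ Aᵢ ^ p`, summing over
`i` gives `F(S(A + B), S(A) + S(B)) ≤ F(S(A), S(A)) + F(S(B), S(B)) = Tr S(A) + Tr S(B)`, while
Bernoulli's inequality bounds `F(S, W)` below by `p * Tr S - (p - 1) * Tr W`. With
`W = S(A) + S(B)` these two bounds combine to the claim.
-/

section JointFunctionalCalculus

open Matrix MeasureTheory
open scoped MatrixOrder

variable {𝕜 m n : Type*} [RCLike 𝕜] [Fintype m] [DecidableEq m] [Fintype n] [DecidableEq n]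
  {A B : Matrix m m 𝕜} {Y Z : Matrix n n 𝕜}

/-- The matrix `Uᴴ K V` of `K` with respect to the eigenbases `U` of `A` and `V` of `Y`. -/
noncomputable def eigenCoord (hA : A.IsHermitian) (hY : Y.IsHermitian) (K : Matrix m n 𝕜) :
    Matrix m n 𝕜 :=
  (hA.eigenvectorUnitary : Matrix m m 𝕜)ᴴ * K * (hY.eigenvectorUnitary : Matrix n n 𝕜)

theorem eigenCoord_surjective (hA : A.IsHermitian) (hY : Y.IsHermitian) :
    Function.Surjective (eigenCoord hA hY) := by
  intro C
  refine ⟨(hA.eigenvectorUnitary : Matrix m m 𝕜) * C *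
    (hY.eigenvectorUnitary : Matrix n n 𝕜)ᴴ, ?_⟩
  have hU := Unitary.coe_star_mul_self hA.eigenvectorUnitary
  have hV := Unitary.coe_star_mul_self hY.eigenvectorUnitary
  rw [star_eq_conjTranspose] at hU hV
  rw [eigenCoord, Matrix.mul_assoc, Matrix.mul_assoc _ _ᴴ, hV, Matrix.mul_one, ← Matrix.mul_assoc,
    hU, Matrix.one_mul]

theorem cfc_eq_eigenvectorUnitary_mul_diagonal_mul (hA : A.IsHermitian) (f : ℝ → ℝ) :
    cfc f A = (hA.eigenvectorUnitary : Matrix m m 𝕜) *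
      diagonal (fun i => (f (hA.eigenvalues i) : 𝕜)) *
        (hA.eigenvectorUnitary : Matrix m m 𝕜)ᴴ := by
  rw [hA.cfc_eq, IsHermitian.cfc, Unitary.conjStarAlgAut_apply, star_eq_conjTranspose]
  rfl

theorem trace_diagonal_mul_mul_diagonal_mul_conjTranspose {R : Type*} [CommSemiring R] [StarRing R]
    (D : m → R) (E : n → R) (M P : Matrix m n R) :
    (diagonal D * M * diagonal E * Pᴴ).trace = ∑ i, ∑ j, D i * E j * (M i j * star (P i j)) := by
  simp only [trace, diag, Matrix.mul_apply (N := Pᴴ), mul_diagonal, diagonal_mul,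
    conjTranspose_apply]
  exact Finset.sum_congr rfl fun i _ => Finset.sum_congr rfl fun j _ => by ring

theorem trace_cfc_mul_mul_cfc_mul_conjTranspose (hA : A.IsHermitian) (hY : Y.IsHermitian)
    (f g : ℝ → ℝ) (K W : Matrix m n 𝕜) :
    (cfc f A * K * cfc g Y * Wᴴ).trace =
      ∑ i, ∑ j, (f (hA.eigenvalues i) : 𝕜) * g (hY.eigenvalues j) *
        (eigenCoord hA hY K i j * star (eigenCoord hA hY W i j)) := by
  rw [← trace_diagonal_mul_mul_diagonal_mul_conjTranspose, eigenCoord, eigenCoord,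
    cfc_eq_eigenvectorUnitary_mul_diagonal_mul hA, cfc_eq_eigenvectorUnitary_mul_diagonal_mul hY]
  simp only [conjTranspose_mul, conjTranspose_conjTranspose, Matrix.mul_assoc]
  rw [trace_mul_comm]
  simp only [Matrix.mul_assoc]

/-- The quadratic form `⟨K, k(L_A, R_Y) K⟩` given by the joint functional calculus of the commuting
operators `L_A` (left multiplication by `A`) and `R_Y` (right multiplication by `Y`). It is written
in eigenbases of `A` and `Y`. -/
noncomputable def jointCfcForm (k : ℝ → ℝ → ℝ) (hA : A.IsHermitian) (hY : Y.IsHermitian)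
    (K : Matrix m n 𝕜) : ℝ :=
  ∑ i, ∑ j, k (hA.eigenvalues i) (hY.eigenvalues j) * ‖eigenCoord hA hY K i j‖ ^ 2

theorem jointCfcForm_mul (f g : ℝ → ℝ) (hA : A.IsHermitian) (hY : Y.IsHermitian)
    (K : Matrix m n 𝕜) :
    jointCfcForm (fun a y => f a * g y) hA hY K =
      RCLike.re (cfc f A * K * cfc g Y * Kᴴ).trace := by
  simp only [trace_cfc_mul_mul_cfc_mul_conjTranspose hA hY, map_sum, jointCfcForm]
  refine Finset.sum_congr rfl fun i _ => Finset.sum_congr rfl fun j _ => ?_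
  rw [RCLike.star_def, RCLike.mul_conj]
  norm_cast

theorem jointCfcForm_linear (α β : ℝ) (hA : A.IsHermitian) (hY : Y.IsHermitian)
    (K : Matrix m n 𝕜) :
    jointCfcForm (fun a y => α * a + β * y) hA hY K =
      α * RCLike.re (A * K * Kᴴ).trace + β * RCLike.re (K * Y * Kᴴ).trace := by
  have hleft := jointCfcForm_mul (fun a => a) (fun _ => 1) hA hY K
  have hright := jointCfcForm_mul (fun _ => 1) (fun y => y) hA hY K
  rw [cfc_id' ℝ A hA.isSelfAdjoint, cfc_const_one ℝ Y hY.isSelfAdjoint, Matrix.mul_one] at hleft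
  rw [cfc_id' ℝ Y hY.isSelfAdjoint, cfc_const_one ℝ A hA.isSelfAdjoint, Matrix.one_mul] at hright
  rw [← hleft, ← hright]
  simp only [jointCfcForm, Finset.mul_sum, ← Finset.sum_add_distrib]
  exact Finset.sum_congr rfl fun i _ => Finset.sum_congr rfl fun j _ => by ring

theorem jointCfcForm_mono {k k' : ℝ → ℝ → ℝ} (hA : A.PosSemidef) (hY : Y.PosDef)
    (hk : ∀ a y, 0 ≤ a → 0 < y → k a y ≤ k' a y) (K : Matrix m n 𝕜) :
    jointCfcForm k hA.1 hY.1 K ≤ jointCfcForm k' hA.1 hY.1 K :=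
  Finset.sum_le_sum fun i _ => Finset.sum_le_sum fun j _ =>
    mul_le_mul_of_nonneg_right (hk _ _ (hA.eigenvalues_nonneg i) (hY.eigenvalues_pos j))
      (sq_nonneg _)

theorem jointCfcForm_congr {k k' : ℝ → ℝ → ℝ} (hA : A.PosSemidef) (hY : Y.PosDef)
    (hk : ∀ a y, 0 ≤ a → 0 < y → k a y = k' a y) (K : Matrix m n 𝕜) :
    jointCfcForm k hA.1 hY.1 K = jointCfcForm k' hA.1 hY.1 K :=
  le_antisymm (jointCfcForm_mono hA hY (fun a y ha hy => (hk a y ha hy).le) K)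
    (jointCfcForm_mono hA hY (fun a y ha hy => (hk a y ha hy).ge) K)

theorem integrable_jointCfcForm {T : Type*} [MeasurableSpace T] {μ : Measure T}
    {k : T → ℝ → ℝ → ℝ} (hA : A.PosSemidef) (hY : Y.PosDef)
    (hk : ∀ a y, 0 ≤ a → 0 < y → Integrable (fun t => k t a y) μ) (K : Matrix m n 𝕜) :
    Integrable (fun t => jointCfcForm (k t) hA.1 hY.1 K) μ :=
  integrable_finsetSum _ fun i _ => integrable_finsetSum _ fun j _ =>
    (hk _ _ (hA.eigenvalues_nonneg i) (hY.eigenvalues_pos j)).mul_const _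

theorem jointCfcForm_integral {T : Type*} [MeasurableSpace T] {μ : Measure T}
    {k : T → ℝ → ℝ → ℝ} (hA : A.PosSemidef) (hY : Y.PosDef)
    (hk : ∀ a y, 0 ≤ a → 0 < y → Integrable (fun t => k t a y) μ) (K : Matrix m n 𝕜) :
    jointCfcForm (fun a y => ∫ t, k t a y ∂μ) hA.1 hY.1 K =
      ∫ t, jointCfcForm (k t) hA.1 hY.1 K ∂μ := by
  have hij i j : Integrable (fun t => k t (hA.1.eigenvalues i) (hY.1.eigenvalues j) *
      ‖eigenCoord hA.1 hY.1 K i j‖ ^ 2) μ :=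
    (hk _ _ (hA.eigenvalues_nonneg i) (hY.eigenvalues_pos j)).mul_const _
  simp only [jointCfcForm, ← integral_mul_const]
  rw [integral_finsetSum _ fun i _ => integrable_finsetSum _ fun j _ => hij i j]
  exact Finset.sum_congr rfl fun i _ => (integral_finsetSum _ fun j _ => hij i j).symm

/-- The concave quadratic function of `W` whose maximum is the resolvent form
`⟨A K, (α L_A + β R_Y)⁻¹ (A K)⟩`. -/
noncomputable def resolventDual (α β : ℝ) (K W : Matrix m n 𝕜) (A : Matrix m m 𝕜)
    (Y : Matrix n n 𝕜) : ℝ :=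
  2 * RCLike.re (A * K * Wᴴ).trace - α * RCLike.re (A * W * Wᴴ).trace -
    β * RCLike.re (W * Y * Wᴴ).trace

omit [DecidableEq m] [DecidableEq n] in
theorem resolventDual_add (α β : ℝ) (K W : Matrix m n 𝕜) (A B : Matrix m m 𝕜)
    (Y Z : Matrix n n 𝕜) :
    resolventDual α β K W (A + B) (Y + Z) =
      resolventDual α β K W A Y + resolventDual α β K W B Z := by
  simp only [resolventDual, Matrix.add_mul, Matrix.mul_add, trace_add, map_add]
  ring

theorem resolventDual_eq_sum (α β : ℝ) (hA : A.IsHermitian) (hY : Y.IsHermitian)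
    (K W : Matrix m n 𝕜) :
    resolventDual α β K W A Y = ∑ i, ∑ j, (2 * hA.eigenvalues i *
        RCLike.re (eigenCoord hA hY K i j * star (eigenCoord hA hY W i j)) -
      (α * hA.eigenvalues i + β * hY.eigenvalues j) * ‖eigenCoord hA hY W i j‖ ^ 2) := by
  have hcross := trace_cfc_mul_mul_cfc_mul_conjTranspose hA hY (fun a => a) (fun _ => 1) K W
  rw [cfc_id' ℝ A hA.isSelfAdjoint, cfc_const_one ℝ Y hY.isSelfAdjoint, Matrix.mul_one] at hcross
  rw [resolventDual, sub_sub, ← jointCfcForm_linear α β hA hY W, hcross]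
  simp only [jointCfcForm, map_sum, Finset.mul_sum, ← Finset.sum_sub_distrib]
  refine Finset.sum_congr rfl fun i _ => Finset.sum_congr rfl fun j _ => ?_
  rw [RCLike.ofReal_one, mul_one, RCLike.re_ofReal_mul, mul_assoc]

theorem two_mul_re_mul_star_sub_mul_norm_sq (a : ℝ) {c : ℝ} (hc : c ≠ 0) (k w : 𝕜) :
    2 * a * RCLike.re (k * star w) - c * ‖w‖ ^ 2 =
      a ^ 2 / c * ‖k‖ ^ 2 - c * ‖w - ((a / c : ℝ) : 𝕜) * k‖ ^ 2 := by
  simp only [← RCLike.normSq_eq_def', RCLike.normSq_apply, map_sub, RCLike.star_def,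
    RCLike.mul_re, RCLike.mul_im, RCLike.conj_re, RCLike.conj_im, RCLike.ofReal_re,
    RCLike.ofReal_im]
  field_simp
  ring

theorem isGreatest_range_resolventDual {α β : ℝ} (hα : 0 ≤ α) (hβ : 0 < β) (hA : A.PosSemidef)
    (hY : Y.PosDef) (K : Matrix m n 𝕜) :
    IsGreatest (Set.range fun W => resolventDual α β K W A Y)
      (jointCfcForm (fun a y => a ^ 2 / (α * a + β * y)) hA.1 hY.1 K) := by
  set a := hA.1.eigenvalues
  set y := hY.1.eigenvalues
  set C := eigenCoord hA.1 hY.1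
  have hden i j : 0 < α * a i + β * y j :=
    add_pos_of_nonneg_of_pos (mul_nonneg hα (hA.eigenvalues_nonneg i))
      (mul_pos hβ (hY.eigenvalues_pos j))
  constructor
  · obtain ⟨W, hW⟩ := eigenCoord_surjective hA.1 hY.1
      (of fun i j => ((a i / (α * a i + β * y j) : ℝ) : 𝕜) * C K i j)
    refine ⟨W, (resolventDual_eq_sum α β hA.1 hY.1 K W).trans ?_⟩
    refine Finset.sum_congr rfl fun i _ => Finset.sum_congr rfl fun j _ => ?_
    rw [two_mul_re_mul_star_sub_mul_norm_sq _ (hden i j).ne', hW]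
    simp [a, y, C]
  · rintro _ ⟨W, rfl⟩
    refine (resolventDual_eq_sum α β hA.1 hY.1 K W).trans_le ?_
    refine Finset.sum_le_sum fun i _ => Finset.sum_le_sum fun j _ => ?_
    rw [two_mul_re_mul_star_sub_mul_norm_sq _ (hden i j).ne']
    exact sub_le_self _ (mul_nonneg (hden i j).le (sq_nonneg _))

theorem jointCfcForm_resolvent_add_le {α β : ℝ} (hα : 0 ≤ α) (hβ : 0 < β) (hA : A.PosSemidef)
    (hB : B.PosSemidef) (hY : Y.PosDef) (hZ : Z.PosDef) (K : Matrix m n 𝕜) :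
    jointCfcForm (fun a y => a ^ 2 / (α * a + β * y)) (hA.add hB).1 (hY.add hZ).1 K ≤
      jointCfcForm (fun a y => a ^ 2 / (α * a + β * y)) hA.1 hY.1 K +
        jointCfcForm (fun a y => a ^ 2 / (α * a + β * y)) hB.1 hZ.1 K := by
  obtain ⟨W, hW⟩ := (isGreatest_range_resolventDual hα hβ (hA.add hB) (hY.add hZ) K).1
  rw [← hW]
  dsimp only
  rw [resolventDual_add]
  exact add_le_add ((isGreatest_range_resolventDual hα hβ hA hY K).2 ⟨W, rfl⟩)
    ((isGreatest_range_resolventDual hα hβ hB hZ K).2 ⟨W, rfl⟩)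

theorem exists_measure_rpow_mul_rpow_eq_integral {p : ℝ} (hp : p ∈ Set.Ioo 1 2) :
    ∃ μ : Measure ℝ, ∀ a y : ℝ, 0 ≤ a → 0 < y →
      IntegrableOn (fun t => t ^ (p - 2) * (a ^ 2 / (1 * a + t * y))) (Set.Ioi 0) μ ∧
      a ^ p * y ^ (1 - p) =
        ∫ t in Set.Ioi 0, t ^ (p - 2) * (a ^ 2 / (1 * a + t * y)) ∂μ := by
  have hq : p - 1 ∈ Set.Ioo 0 1 := ⟨by linarith [hp.1], by linarith [hp.2]⟩
  obtain ⟨μ, hμ⟩ := Real.exists_measure_rpow_eq_integral_rpowIntegrand₀₁ hq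
  refine ⟨μ, fun a y ha hy => ?_⟩
  have hay : 0 ≤ a / y := by positivity
  have hker : Set.EqOn (fun t => a * Real.rpowIntegrand₀₁ (p - 1) t (a / y))
      (fun t => t ^ (p - 2) * (a ^ 2 / (1 * a + t * y))) (Set.Ioi 0) := by
    intro t (ht : 0 < t)
    have hsum : t + a / y = (1 * a + t * y) / y := by field_simp; ring
    simp only [Real.rpowIntegrand₀₁_eq_pow_div hq ht.le hay, hsum, sub_sub, one_add_one_eq_two]
    field_simp
  obtain ⟨hint, hpow⟩ := hμ (a / y) hay
  refine ⟨IntegrableOn.congr_fun (hint.const_mul a) hker measurableSet_Ioi, ?_⟩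
  rw [← setIntegral_congr_fun measurableSet_Ioi hker, integral_const_mul, ← hpow,
    Real.div_rpow ha hy.le, ← neg_sub p 1, Real.rpow_neg hy.le, ← div_eq_mul_inv, mul_div_assoc',
    ← Real.rpow_one_add' ha (by linarith [hp.1]), add_sub_cancel]

/-- The Lieb–Ando functional `Re Tr (A ^ p * K * Y ^ (1 - p) * Kᴴ)`. -/
noncomputable def liebAndo (p : ℝ) (K : Matrix m n 𝕜) (A : Matrix m m 𝕜) (Y : Matrix n n 𝕜) : ℝ :=
  RCLike.re (A ^ p * K * Y ^ (1 - p) * Kᴴ).trace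

theorem liebAndo_eq_jointCfcForm (p : ℝ) (hA : A.PosSemidef) (hY : Y.PosSemidef)
    (K : Matrix m n 𝕜) :
    liebAndo p K A Y = jointCfcForm (fun a y => a ^ p * y ^ (1 - p)) hA.1 hY.1 K := by
  rw [liebAndo, CFC.rpow_eq_cfc_real hA.nonneg, CFC.rpow_eq_cfc_real hY.nonneg,
    ← jointCfcForm_mul (· ^ p) (· ^ (1 - p)) hA.1 hY.1]

theorem liebAndo_one (K : Matrix m n 𝕜) (hA : A.PosSemidef) (hY : Y.PosSemidef) :
    liebAndo 1 K A Y = RCLike.re (A * K * Kᴴ).trace := by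
  rw [liebAndo, CFC.rpow_one A hA.nonneg, sub_self, CFC.rpow_zero Y hY.nonneg, Matrix.mul_one]

theorem liebAndo_two (K : Matrix m n 𝕜) (hA : A.PosSemidef) (hY : Y.PosDef) :
    liebAndo 2 K A Y = jointCfcForm (fun a y => a ^ 2 / (0 * a + 1 * y)) hA.1 hY.1 K := by
  rw [liebAndo_eq_jointCfcForm 2 hA hY.posSemidef]
  refine jointCfcForm_congr hA hY (fun a y _ _ => ?_) K
  norm_num [Real.rpow_neg_one, div_eq_mul_inv]

theorem liebAndo_add_le_of_mem_Ioo {p : ℝ} (hp : p ∈ Set.Ioo 1 2) (K : Matrix m n 𝕜)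
    (hA : A.PosSemidef) (hB : B.PosSemidef) (hY : Y.PosDef) (hZ : Z.PosDef) :
    liebAndo p K (A + B) (Y + Z) ≤ liebAndo p K A Y + liebAndo p K B Z := by
  obtain ⟨μ, hμ⟩ := exists_measure_rpow_mul_rpow_eq_integral hp
  let k (t a y : ℝ) : ℝ := t ^ (p - 2) * (a ^ 2 / (1 * a + t * y))
  have hk a y (ha : 0 ≤ a) (hy : 0 < y) : IntegrableOn (k · a y) (Set.Ioi 0) μ := (hμ a y ha hy).1
  have hform {A : Matrix m m 𝕜} {Y : Matrix n n 𝕜} (hA : A.PosSemidef) (hY : Y.PosDef) :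
      liebAndo p K A Y = ∫ t in Set.Ioi 0, jointCfcForm (k t) hA.1 hY.1 K ∂μ := by
    rw [← jointCfcForm_integral hA hY hk, liebAndo_eq_jointCfcForm p hA hY.posSemidef]
    exact jointCfcForm_congr hA hY (fun a y ha hy => (hμ a y ha hy).2) K
  have hint {A : Matrix m m 𝕜} {Y : Matrix n n 𝕜} (hA : A.PosSemidef) (hY : Y.PosDef) :
      IntegrableOn (fun t => jointCfcForm (k t) hA.1 hY.1 K) (Set.Ioi 0) μ :=
    integrable_jointCfcForm hA hY hk K
  rw [hform (hA.add hB) (hY.add hZ), hform hA hY, hform hB hZ,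
    ← integral_add (hint hA hY) (hint hB hZ)]
  refine setIntegral_mono_on (hint (hA.add hB) (hY.add hZ)) ((hint hA hY).add (hint hB hZ))
    measurableSet_Ioi fun t (ht : 0 < t) => ?_
  have := mul_le_mul_of_nonneg_left
    (jointCfcForm_resolvent_add_le zero_le_one ht hA hB hY hZ K) (Real.rpow_nonneg ht.le (p - 2))
  simpa only [k, jointCfcForm, mul_add, Finset.mul_sum, mul_assoc] using this

theorem liebAndo_add_le {p : ℝ} (hp : p ∈ Set.Icc 1 2) (K : Matrix m n 𝕜)
    (hA : A.PosSemidef) (hB : B.PosSemidef) (hY : Y.PosDef) (hZ : Z.PosDef) :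
    liebAndo p K (A + B) (Y + Z) ≤ liebAndo p K A Y + liebAndo p K B Z := by
  rcases hp.1.eq_or_lt with rfl | hp1
  · rw [liebAndo_one K (hA.add hB) (hY.add hZ).posSemidef, liebAndo_one K hA hY.posSemidef,
      liebAndo_one K hB hZ.posSemidef, Matrix.add_mul, Matrix.add_mul, trace_add, map_add]
  rcases hp.2.eq_or_lt with rfl | hp2
  · rw [liebAndo_two K (hA.add hB) (hY.add hZ), liebAndo_two K hA hY, liebAndo_two K hB hZ]
    exact jointCfcForm_resolvent_add_le le_rfl one_pos hA hB hY hZ K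
  · exact liebAndo_add_le_of_mem_Ioo ⟨hp1, hp2⟩ K hA hB hY hZ

end JointFunctionalCalculus

section TraceMinkowski

open Matrix Filter
open scoped MatrixOrder Topology

variable {𝕜 ι n : Type*} [RCLike 𝕜] [Fintype n] [DecidableEq n] {S W : Matrix n n 𝕜}

theorem rpow_sum_rpow_one_div_rpow (s : Finset ι) (A : ι → Matrix n n 𝕜) {p : ℝ} (hp : 0 < p) :
    ((∑ i ∈ s, A i ^ p) ^ (1 / p)) ^ p = ∑ i ∈ s, A i ^ p := by
  have hsum : 0 ≤ ∑ i ∈ s, A i ^ p := Finset.sum_nonneg fun i _ => CFC.rpow_nonneg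
  rw [CFC.rpow_rpow_of_exponent_nonneg _ _ _ (one_div_nonneg.2 hp.le) hp.le hsum,
    one_div_mul_cancel hp.ne', CFC.rpow_one _ hsum]

theorem liebAndo_rpow_sum_rpow_one_div {m : Type*} [Fintype m] [DecidableEq m] (s : Finset ι)
    (A : ι → Matrix m m 𝕜) {p : ℝ} (hp : 0 < p) (K : Matrix m n 𝕜) (W : Matrix n n 𝕜) :
    liebAndo p K ((∑ i ∈ s, A i ^ p) ^ (1 / p)) W = ∑ i ∈ s, liebAndo p K (A i) W := by
  simp only [liebAndo, rpow_sum_rpow_one_div_rpow s A hp, Matrix.sum_mul, trace_sum, map_sum]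

theorem mul_add_mul_le_rpow_mul_rpow {p s w : ℝ} (hp : 1 ≤ p) (hs : 0 ≤ s) (hw : 0 < w) :
    p * s + (1 - p) * w ≤ s ^ p * w ^ (1 - p) := by
  have h := one_add_mul_self_le_rpow_one_add (s := s / w - 1)
    (by linarith [div_nonneg hs hw.le]) hp
  rw [add_sub_cancel, Real.div_rpow hs hw.le] at h
  rw [Real.rpow_sub hw, Real.rpow_one]
  calc p * s + (1 - p) * w = (1 + p * (s / w - 1)) * w := by field_simp; ring
    _ ≤ s ^ p / w ^ p * w := by gcongr
    _ = s ^ p * (w / w ^ p) := by ring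

theorem mul_trace_add_mul_trace_le_liebAndo {p : ℝ} (hp : 1 ≤ p) (hS : S.PosSemidef)
    (hW : W.PosDef) :
    p * RCLike.re S.trace + (1 - p) * RCLike.re W.trace ≤ liebAndo p 1 S W := by
  have h := jointCfcForm_mono hS hW
    (fun s w hs hw => mul_add_mul_le_rpow_mul_rpow hp hs hw) (1 : Matrix n n 𝕜)
  rw [jointCfcForm_linear, ← liebAndo_eq_jointCfcForm p hS hW.posSemidef] at h
  simpa only [conjTranspose_one, Matrix.mul_one, Matrix.one_mul] using h

theorem rpow_mul_add_rpow_le {p x ε : ℝ} (hp : 1 ≤ p) (hx : 0 ≤ x) (hε : 0 ≤ ε) :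
    x ^ p * (x + ε) ^ (1 - p) ≤ x := by
  rcases hx.eq_or_lt with rfl | hx
  · rw [Real.zero_rpow (by positivity), zero_mul]
  calc x ^ p * (x + ε) ^ (1 - p) ≤ x ^ p * x ^ (1 - p) :=
        mul_le_mul_of_nonneg_left
          (Real.rpow_le_rpow_of_nonpos hx (by linarith) (by linarith)) (by positivity)
    _ = x := by rw [← Real.rpow_add hx, add_sub_cancel, Real.rpow_one]

theorem rpow_mul_add_smul_one_rpow_le {p ε : ℝ} (hp : 1 ≤ p) (hS : S.PosSemidef) (hε : 0 < ε) :
    S ^ p * (S + ε • 1) ^ (1 - p) ≤ S := by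
  have hsa : IsSelfAdjoint S := hS.1.isSelfAdjoint
  have hcont (f : ℝ → ℝ) : ContinuousOn f (spectrum ℝ S) := S.finite_real_spectrum.continuousOn f
  have hspec (x) (hx : x ∈ spectrum ℝ S) : 0 ≤ x := spectrum_nonneg_of_nonneg hS.nonneg hx
  have hadd : S + ε • 1 = cfc (fun x : ℝ => x + ε) S := by
    rw [cfc_add_const ε (fun x => x) S (hcont _) hsa, cfc_id' ℝ S hsa,
      Algebra.algebraMap_eq_smul_one]
  calc S ^ p * (S + ε • 1) ^ (1 - p) = cfc (fun x : ℝ => x ^ p * (x + ε) ^ (1 - p)) S := by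
        rw [hadd, CFC.rpow_eq_cfc_real hS.nonneg,
          CFC.cfc_rpow (fun x hx => add_pos_of_nonneg_of_pos (hspec x hx) hε) (hcont _) hsa,
          ← cfc_mul _ _ S (hcont _) (hcont _)]
    _ ≤ cfc (fun x : ℝ => x) S := cfc_mono
        (fun x hx => rpow_mul_add_rpow_le hp (hspec x hx) hε.le) (hcont _) (hcont _)
    _ = S := cfc_id' ℝ S hsa

theorem liebAndo_self_add_smul_one_le {p ε : ℝ} (hp : 1 ≤ p) (hS : S.PosSemidef) (hε : 0 < ε) :
    liebAndo p 1 S (S + ε • 1) ≤ RCLike.re S.trace := by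
  have h := (le_iff.1 (rpow_mul_add_smul_one_rpow_le hp hS hε)).trace_nonneg
  rw [trace_sub, sub_nonneg] at h
  rw [liebAndo, Matrix.mul_one, conjTranspose_one, Matrix.mul_one]
  exact (RCLike.le_iff_re_im.1 h).1

theorem mul_trace_add_mul_trace_le_liebAndo_add (s : Finset ι) {A B : ι → Matrix n n 𝕜}
    (hA : ∀ i ∈ s, (A i).PosSemidef) (hB : ∀ i ∈ s, (B i).PosSemidef) {p : ℝ}
    (hp : p ∈ Set.Icc 1 2) {Y Z : Matrix n n 𝕜} (hY : Y.PosDef) (hZ : Z.PosDef) :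
    p * RCLike.re ((∑ i ∈ s, (A i + B i) ^ p) ^ (1 / p)).trace +
        (1 - p) * RCLike.re (Y + Z).trace ≤
      liebAndo p 1 ((∑ i ∈ s, A i ^ p) ^ (1 / p)) Y +
        liebAndo p 1 ((∑ i ∈ s, B i ^ p) ^ (1 / p)) Z := by
  have hp0 : 0 < p := zero_lt_one.trans_le hp.1
  have hS : ((∑ i ∈ s, (A i + B i) ^ p) ^ (1 / p)).PosSemidef :=
    nonneg_iff_posSemidef.1 CFC.rpow_nonneg
  refine (mul_trace_add_mul_trace_le_liebAndo hp.1 hS (hY.add hZ)).trans ?_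
  rw [liebAndo_rpow_sum_rpow_one_div s _ hp0, liebAndo_rpow_sum_rpow_one_div s _ hp0,
    liebAndo_rpow_sum_rpow_one_div s _ hp0, ← Finset.sum_add_distrib]
  exact Finset.sum_le_sum fun i hi => liebAndo_add_le hp 1 (hA i hi) (hB i hi) hY hZ

theorem carlen_lieb_trace_minkowski_convex_general (s : Finset ι) {A B : ι → Matrix n n 𝕜}
    (hA : ∀ i ∈ s, (A i).PosSemidef) (hB : ∀ i ∈ s, (B i).PosSemidef) {p : ℝ}
    (hp : p ∈ Set.Icc 1 2) :
    RCLike.re ((∑ i ∈ s, (A i + B i) ^ p) ^ (1 / p)).trace ≤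
      RCLike.re ((∑ i ∈ s, A i ^ p) ^ (1 / p)).trace +
        RCLike.re ((∑ i ∈ s, B i ^ p) ^ (1 / p)).trace := by
  set S := (∑ i ∈ s, (A i + B i) ^ p) ^ (1 / p)
  set Y := (∑ i ∈ s, A i ^ p) ^ (1 / p)
  set Z := (∑ i ∈ s, B i ^ p) ^ (1 / p)
  have hY : Y.PosSemidef := nonneg_iff_posSemidef.1 CFC.rpow_nonneg
  have hZ : Z.PosSemidef := nonneg_iff_posSemidef.1 CFC.rpow_nonneg
  -- `Y` and `Z` may be singular, where the negative powers in `liebAndo` are junk: shift by `ε`.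
  have hshift : ∀ ε > 0, p * RCLike.re S.trace + (1 - p) *
      (RCLike.re Y.trace + RCLike.re Z.trace + ε * (2 * Fintype.card n)) ≤
        RCLike.re Y.trace + RCLike.re Z.trace := by
    intro ε hε
    have hε1 : (ε • (1 : Matrix n n 𝕜)).PosDef := PosDef.one.smul hε
    have htrace : RCLike.re (Y + ε • 1 + (Z + ε • 1)).trace =
        RCLike.re Y.trace + RCLike.re Z.trace + ε * (2 * Fintype.card n) := by
      simp only [trace_add, trace_smul, trace_one, map_add, RCLike.smul_re, RCLike.natCast_re]
      ring
    rw [← htrace]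
    exact (mul_trace_add_mul_trace_le_liebAndo_add s hA hB hp (PosDef.posSemidef_add hY hε1)
      (PosDef.posSemidef_add hZ hε1)).trans (add_le_add (liebAndo_self_add_smul_one_le hp.1 hY hε)
        (liebAndo_self_add_smul_one_le hp.1 hZ hε))
  have hlim : Tendsto (fun ε : ℝ => p * RCLike.re S.trace + (1 - p) *
      (RCLike.re Y.trace + RCLike.re Z.trace + ε * (2 * Fintype.card n))) (𝓝[>] 0)
      (𝓝 (p * RCLike.re S.trace + (1 - p) *
        (RCLike.re Y.trace + RCLike.re Z.trace + 0 * (2 * Fintype.card n)))) :=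
    Continuous.continuousWithinAt (by fun_prop)
  have hzero := le_of_tendsto hlim (eventually_mem_nhdsWithin.mono hshift)
  exact le_of_mul_le_mul_left (by linarith) (zero_lt_one.trans_le hp.1)

theorem mpow_eq_rpow {A : Matrix n n ℂ} (hA : A.PosSemidef) (p : ℝ) : mpow A p = A ^ p :=
  (CFC.rpow_eq_cfc_real hA.nonneg).symm

theorem mpow_sum_mpow [Fintype ι] {A : ι → Matrix n n ℂ} (hA : ∀ i, (A i).PosSemidef) (p q : ℝ) :
    mpow (∑ i, mpow (A i) p) q = (∑ i, A i ^ p) ^ q := by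
  have hsum : 0 ≤ ∑ i, A i ^ p := Finset.sum_nonneg fun i _ => CFC.rpow_nonneg
  simp only [mpow_eq_rpow (hA _), mpow_eq_rpow (nonneg_iff_posSemidef.1 hsum)]

end TraceMinkowski

theorem carlen_lieb_trace_minkowski_convex {d : Type*} [Fintype d] [DecidableEq d]
    (N : ℕ) (A B : Fin N → Matrix d d ℂ)
    (hA : ∀ i, (A i).PosDef) (hB : ∀ i, (B i).PosDef)
    (p : ℝ) (hp1 : 1 ≤ p) (hp2 : p ≤ 2) :
    (mpow (∑ i, mpow (A i + B i) p) (1/p)).trace.re ≤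
      (mpow (∑ i, mpow (A i) p) (1/p)).trace.re
        + (mpow (∑ i, mpow (B i) p) (1/p)).trace.re := by
  have hA' i : (A i).PosSemidef := (hA i).posSemidef
  have hB' i : (B i).PosSemidef := (hB i).posSemidef
  rw [mpow_sum_mpow hA', mpow_sum_mpow hB', mpow_sum_mpow fun i => (hA' i).add (hB' i)]
  exact carlen_lieb_trace_minkowski_convex_general Finset.univ (fun i _ => hA' i)
    (fun i _ => hB' i) ⟨hp1, hp2⟩
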